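/- If f is MT-convex on I, a, b ∈ I with a < b, and f is integrable on [a,b], then (2/(b-a)) ∫_a^b τ(x) f(x) dx ≤ (f(a)+f(b))/2, where τ(x) = √((b-x)(x-a))/(b-a). -/

import Mathlib

theorem mt_convex_hadamard_right (I : Set ℝ) (hI : Convex ℝ I) (f : ℝ → ℝ)
    (hf0 : ∀ x ∈ I, 0 ≤ f x)
    (hf : ∀ x ∈ I, ∀ y ∈ I, ∀ t ∈ Set.Ioo (0:ℝ) 1,
      f (t * x + (1 - t) * y) ≤
        Real.sqrt t / (2 * Real.sqrt (1 - t)) * f x +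
        Real.sqrt (1 - t) / (2 * Real.sqrt t) * f y)
    (a b : ℝ) (ha : a ∈ I) (hb : b ∈ I) (hab : a < b)
    (hint : IntervalIntegrable f MeasureTheory.volume a b) :
    (2 / (b - a)) * ∫ x in a..b, (Real.sqrt ((b - x) * (x - a)) / (b - a)) * f x ≤
      (f a + f b) / 2 := by 
  have hba : 0 < b - a := sub_pos.mpr hab
  have hne : b - a ≠ 0 := hba.ne'
  have key : ∀ x ∈ Set.Icc a b, Real.sqrt ((b - x) * (x - a)) / (b - a) * f x ≤
      (b * f a - a * f b) / (2 * (b - a)) + (f b - f a) / (2 * (b - a)) * x := by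
    intro x hx
    have hR : (b * f a - a * f b) / (2 * (b - a)) + (f b - f a) / (2 * (b - a)) * x =
        ((b - x) * f a + (x - a) * f b) / (2 * (b - a)) := by
      field_simp
      ring
    rw [hR]
    have h1 : 0 ≤ b - x := sub_nonneg.mpr hx.2
    have h2 : 0 ≤ x - a := sub_nonneg.mpr hx.1
    have hfa := hf0 a ha
    have hfb := hf0 b hb
    rcases h1.eq_or_lt with h | h1'
    · rw [← h, zero_mul, Real.sqrt_zero, zero_div, zero_mul]
      positivity
    rcases h2.eq_or_lt with h | h2'
    · rw [← h, mul_zero, Real.sqrt_zero, zero_div, zero_mul]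
      positivity
    obtain ⟨t, ht⟩ : ∃ t, t = (b - x) / (b - a) := ⟨_, rfl⟩
    have ht1 : 1 - t = (x - a) / (b - a) := by
      rw [ht]
      field_simp
      ring
    have t0 : 0 < t := by rw [ht]; positivity
    have t1 : 0 < 1 - t := by rw [ht1]; positivity
    have h := hf a ha b hb t ⟨t0, by linarith⟩
    have hxe : t * a + (1 - t) * b = x := by
      rw [ht1, ht]
      field_simp
      ring
    rw [hxe] at h
    have hs : Real.sqrt ((b - x) * (x - a)) / (b - a) = Real.sqrt t * Real.sqrt (1 - t) := by
      rw [ht1, ht, Real.sqrt_div h1, Real.sqrt_div h2, Real.sqrt_mul h1, div_mul_div_comm,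
        Real.mul_self_sqrt hba.le]
    have p0 := Real.sqrt_pos.mpr t0
    have p1 := Real.sqrt_pos.mpr t1
    have q0 := Real.sq_sqrt t0.le
    have q1 := Real.sq_sqrt t1.le
    rw [hs]
    calc _ ≤ Real.sqrt t * Real.sqrt (1 - t) * (Real.sqrt t / (2 * Real.sqrt (1 - t)) * f a +
        Real.sqrt (1 - t) / (2 * Real.sqrt t) * f b) := by gcongr
      _ = (Real.sqrt t ^ 2 * f a + Real.sqrt (1 - t) ^ 2 * f b) / 2 := by
        generalize Real.sqrt t = u at *
        generalize Real.sqrt (1 - t) = v at *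
        field_simp
      _ = _ := by
        rw [q0, q1, ht1, ht]
        field_simp
  have hm := intervalIntegral.integral_mono_on hab.le
    (hint.continuousOn_mul (g := fun x => Real.sqrt ((b - x) * (x - a)) / (b - a))
      (by fun_prop))
    (Continuous.intervalIntegrable (by fun_prop) a b) key
  have hv : ∫ x in a..b, ((b * f a - a * f b) / (2 * (b - a)) + (f b - f a) / (2 * (b - a)) * x)
      = (b - a) * (f a + f b) / 4 := by
    rw [intervalIntegral.integral_add (Continuous.intervalIntegrable (by fun_prop) a b)
      (Continuous.intervalIntegrable (by fun_prop) a b), intervalIntegral.integral_const,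
      intervalIntegral.integral_const_mul, integral_id, smul_eq_mul]
    field_simp
    ring
  rw [hv] at hm
  calc _ ≤ 2 / (b - a) * ((b - a) * (f a + f b) / 4) :=
        mul_le_mul_of_nonneg_left hm (by positivity)
    _ = _ := by
      field_simp
      ring
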